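/- Let n ≥ 1, A = ℤ[x]/(x^{n+1}), and B = A ⊗_ℤ A, with A a B-module via the multiplication map. Then, as abelian groups: Ext^0_B(A,A) ≅ A (a free abelian group of rank n+1); for every q ≥ 1, Ext^{2q−1}_B(A,A) ≅ ℤ^n; and for every q ≥ 1, Ext^{2q}_B(A,A) ≅ ℤ^n ⊕ ℤ/(n+1)ℤ. -/

import Mathlib

/-!
Let `f` be monic and `S = R[x]/(f)`. Then `S ⊗ S = S[Y]/(f(Y))`, and `f(Y) = (Y - x) g(Y)` is a
product of two monic, hence regular, polynomials. So each of `Y - x` and `g(Y)` generates the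
annihilator of the other in `S ⊗ S`, which gives a resolution of `S = S[Y]/(Y - x)` by free modules
of rank one, of period two. Applying `Hom(-, S)` turns `Y - x` into `0` and `g(Y)` into
`g(x) = f'(x)`, so that the cohomology of `S` is the annihilator of `f'(x)` in odd degrees and
`S ⧸ (f'(x))` in positive even degrees. For `f = Xⁿ⁺¹` multiplication by `f'(x) = (n + 1) xⁿ` sends
`∑ aᵢ xⁱ` to `(n + 1) a₀ xⁿ`.
-/

open Polynomial TensorProduct CategoryTheory

noncomputable section

/-- `A = ℤ[x]/(x^{n+1})`, the truncated polynomial ring. -/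
abbrev A (n : ℕ) : Type := AdjoinRoot ((X : ℤ[X]) ^ (n + 1))

/-- `B = A ⊗_ℤ A`. -/
abbrev B (n : ℕ) : Type := A n ⊗[ℤ] A n

/-- The class of `X` in `A`, i.e. the element `x`. -/
abbrev xA (n : ℕ) : A n := AdjoinRoot.root _

/-- `A` is a `B`-module via the multiplication map `μ(a ⊗ b) = ab`. -/
instance (n : ℕ) : Algebra (B n) (A n) :=
  (Algebra.TensorProduct.lmul' ℤ (S := A n)).toRingHom.toAlgebra

instance (n : ℕ) : HasDerivedCategory.{1} (ModuleCat.{0} (B n)) :=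
  HasDerivedCategory.standard _

instance (n : ℕ) : HasExt.{1} (ModuleCat.{0} (B n)) :=
  hasExt_of_hasDerivedCategory _

/-- `A` as an object of the category of `B`-modules. -/
def M (n : ℕ) : ModuleCat.{0} (B n) := ModuleCat.of (B n) (A n)

universe w v u

section DimensionShift

variable {C : Type u} [Category.{v} C] [Abelian C] [HasExt.{w} C]

/-- The isomorphism of `Ext` groups induced by an isomorphism of the first argument. -/
def extCongrLeft {X X' : C} (e : X ≅ X') (Y : C) (m : ℕ) :
    Abelian.Ext X Y m ≃+ Abelian.Ext X' Y m :=
  (((Abelian.extFunctor m).mapIso e.symm.op).app Y).addCommGroupIsoToAddEquiv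

variable {S : ShortComplex C} (hS : S.ShortExact) (Y : C)

/-- The connecting homomorphism `Hom(X₁, Y) → Ext¹(X₃, Y)` of a short exact sequence. -/
def extConnectingHom : (S.X₁ ⟶ Y) →+ Abelian.Ext S.X₃ Y 1 :=
  (hS.extClass.precomp Y (add_comm 1 0)).comp
    (Abelian.Ext.addEquiv₀ (X := S.X₁) (Y := Y)).symm.toAddMonoidHom

lemma extConnectingHom_eq_zero_iff (f : S.X₁ ⟶ Y) :
    extConnectingHom hS Y f = 0 ↔ ∃ g : S.X₂ ⟶ Y, S.f ≫ g = f := by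
  constructor
  · intro hf
    obtain ⟨x, hx⟩ := Abelian.Ext.contravariant_sequence_exact₁ hS Y (.mk₀ f) (add_comm 1 0) hf
    obtain ⟨g, rfl⟩ := Abelian.Ext.addEquiv₀.symm.surjective x
    exact ⟨g, Abelian.Ext.addEquiv₀.symm.injective (by simpa using hx)⟩
  · rintro ⟨g, rfl⟩
    change hS.extClass.comp (.mk₀ (S.f ≫ g)) (add_comm 1 0) = 0
    rw [← Abelian.Ext.mk₀_comp_mk₀]
    exact hS.extClass_comp_assoc _

variable [Projective S.X₂]

lemma precomp_extClass_surjective (m : ℕ) :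
    Function.Surjective (hS.extClass.precomp Y (add_comm 1 m)) := fun a ↦
  Abelian.Ext.contravariant_sequence_exact₃ hS Y a (Abelian.Ext.eq_zero_of_projective _)
    (add_comm 1 m)

lemma precomp_extClass_succ_injective (m : ℕ) :
    Function.Injective (hS.extClass.precomp Y (add_comm 1 (m + 1))) := by
  refine (injective_iff_map_eq_zero _).2 fun a ha ↦ ?_
  obtain ⟨b, rfl⟩ := Abelian.Ext.contravariant_sequence_exact₁ hS Y a (add_comm 1 (m + 1)) ha
  rw [Abelian.Ext.eq_zero_of_projective b, Abelian.Ext.comp_zero]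

/-- Dimension shifting along a short exact sequence with projective middle term. -/
def extShiftEquiv (m : ℕ) : Abelian.Ext S.X₃ Y (m + 2) ≃+ Abelian.Ext S.X₁ Y (m + 1) :=
  (AddEquiv.ofBijective (hS.extClass.precomp Y (add_comm 1 (m + 1)))
    ⟨precomp_extClass_succ_injective hS Y m, precomp_extClass_surjective hS Y (m + 1)⟩).symm

lemma extConnectingHom_surjective : Function.Surjective (extConnectingHom hS Y) :=
  (precomp_extClass_surjective hS Y 0).comp (Abelian.Ext.addEquiv₀ (X := S.X₁)).symm.surjective

/-- `Ext¹(X₃, Y)` as the cokernel of `Hom(X₂, Y) → Hom(X₁, Y)`, where the cokernel is presented by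
an arbitrary surjection `φ` with the right kernel. -/
def extOneEquiv {G : Type*} [AddCommGroup G] (φ : (S.X₁ ⟶ Y) →+ G)
    (hφ : Function.Surjective φ) (hker : ∀ f, φ f = 0 ↔ ∃ g : S.X₂ ⟶ Y, S.f ≫ g = f) :
    Abelian.Ext S.X₃ Y 1 ≃+ G :=
  (QuotientAddGroup.quotientKerEquivOfSurjective _ (extConnectingHom_surjective hS Y)).symm.trans
    ((QuotientAddGroup.quotientAddEquivOfEq <| by
      ext f; exact (extConnectingHom_eq_zero_iff hS Y f).trans (hker f).symm).trans
        (QuotientAddGroup.quotientKerEquivOfSurjective φ hφ))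

end DimensionShift

section ExactPair

variable {R : Type u} [CommRing R]

/-- An exact pair of zero divisors: each of `s` and `t` generates the annihilator of the other. -/
structure IsExactPair (s t : R) : Prop where
  mul_left_eq_zero_iff : ∀ b, s * b = 0 ↔ t ∣ b
  mul_right_eq_zero_iff : ∀ b, t * b = 0 ↔ s ∣ b

/-- A homomorphism `R ⧸ (t) → N` is determined by the image of `1`, an element killed by `t`. -/
def homQuotientSpanSingletonEquiv (t : R) (N : ModuleCat.{u} R) :
    (ModuleCat.of R (R ⧸ Ideal.span {t}) ⟶ N) ≃+ Submodule.torsionBy R N t where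
  toFun f := ⟨f.hom (Submodule.Quotient.mk 1), by
    rw [Submodule.mem_torsionBy_iff, ← map_smul, ← Submodule.Quotient.mk_smul, smul_eq_mul, mul_one,
      (Submodule.Quotient.mk_eq_zero _).2 (Ideal.mem_span_singleton_self t), map_zero]⟩
  invFun y := ModuleCat.ofHom <|
    Submodule.liftQSpanSingleton t (LinearMap.toSpanSingleton R N y) (by simp)
  left_inv _ := ModuleCat.hom_ext <| Submodule.linearMap_qext _ <| LinearMap.ext_ring <|
    one_smul R _
  right_inv y := Subtype.ext (one_smul R (y : N))
  map_add' _ _ := rfl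

namespace IsExactPair

variable {s t : R}

lemma symm (h : IsExactPair s t) : IsExactPair t s :=
  ⟨h.mul_right_eq_zero_iff, h.mul_left_eq_zero_iff⟩

lemma mul_eq_zero (h : IsExactPair s t) : s * t = 0 :=
  (h.mul_left_eq_zero_iff t).2 dvd_rfl

lemma map_of_surjective {C : Type*} [CommRing C] {φ : C →+* R} (hφ : Function.Surjective φ) {g h : C}
    (hg : IsLeftRegular g) (hh : IsLeftRegular h) (hker : ∀ c, φ c = 0 ↔ g * h ∣ c) :
    IsExactPair (φ g) (φ h) := by
  have dvd_of_mul_eq_zero {g h : C} (hg : IsLeftRegular g) (hker : ∀ c, φ c = 0 ↔ g * h ∣ c)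
      (b : R) : φ g * b = 0 ↔ φ h ∣ b := by
    obtain ⟨c, rfl⟩ := hφ b
    constructor
    · intro hc
      obtain ⟨d, hd⟩ := (hker (g * c)).1 (by rw [map_mul, hc])
      have hcd : c = h * d := hg (by simpa only [mul_assoc] using hd)
      exact hcd ▸ map_dvd φ (dvd_mul_right h d)
    · rintro ⟨d, hd⟩
      rw [hd, ← mul_assoc, ← map_mul, (hker _).2 dvd_rfl, zero_mul]
  exact ⟨dvd_of_mul_eq_zero hg hker,
    dvd_of_mul_eq_zero hh fun c ↦ by rw [hker, mul_comm]⟩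

/-- The short complex `R ⧸ (t) → R → R ⧸ (s)` whose first map is multiplication by `s`. -/
def shortComplex (h : IsExactPair s t) : ShortComplex (ModuleCat.{u} R) where
  X₁ := ModuleCat.of R (R ⧸ Ideal.span {t})
  X₂ := ModuleCat.of R R
  X₃ := ModuleCat.of R (R ⧸ Ideal.span {s})
  f := ModuleCat.ofHom <| Submodule.liftQSpanSingleton t (LinearMap.mulLeft R s) h.mul_eq_zero
  g := ModuleCat.ofHom (Ideal.span {s}).mkQ
  zero := ModuleCat.hom_ext <| Submodule.linearMap_qext _ <| LinearMap.ext_ring <|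
    (Submodule.Quotient.mk_eq_zero _).2 <| Ideal.mem_span_singleton.2 <| dvd_mul_right s 1

instance (h : IsExactPair s t) : Projective h.shortComplex.X₂ :=
  (IsProjective.iff_projective R).1 inferInstance

lemma shortExact_shortComplex (h : IsExactPair s t) : h.shortComplex.ShortExact where
  exact := by
    refine (ShortComplex.ShortExact.moduleCat_exact_iff_function_exact _).2 fun b ↦ ?_
    constructor
    · intro hb
      obtain ⟨c, rfl⟩ := Ideal.mem_span_singleton.1 ((Submodule.Quotient.mk_eq_zero _).1 hb)
      exact ⟨Submodule.Quotient.mk c, rfl⟩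
    · rintro ⟨c, rfl⟩
      exact congr($(h.shortComplex.zero).hom c)
  mono_f := by
    refine (ModuleCat.mono_iff_injective _).2 <| (injective_iff_map_eq_zero _).2 fun c hc ↦ ?_
    obtain ⟨b, rfl⟩ := Submodule.Quotient.mk_surjective _ c
    exact (Submodule.Quotient.mk_eq_zero _).2 <|
      Ideal.mem_span_singleton.2 ((h.mul_left_eq_zero_iff b).1 hc)
  epi_g := (ModuleCat.epi_iff_surjective _).2 (Submodule.mkQ_surjective _)

variable [HasExt.{w} (ModuleCat.{u} R)] (N : ModuleCat.{u} R)

/-- `Ext¹(R ⧸ (s), N)` is the homology at the middle of `N → N → N`, the maps being multiplication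
by `s` and by `t`. -/
def extOne (h : IsExactPair s t) :
    Abelian.Ext (ModuleCat.of R (R ⧸ Ideal.span {s})) N 1 ≃+
      Submodule.torsionBy R N t ⧸
        (LinearMap.range (LinearMap.lsmul R N s)).submoduleOf (Submodule.torsionBy R N t) :=
  extOneEquiv h.shortExact_shortComplex N
    ((Submodule.mkQ _).toAddMonoidHom.comp (homQuotientSpanSingletonEquiv t N).toAddMonoidHom)
    ((Submodule.mkQ_surjective _).comp (homQuotientSpanSingletonEquiv t N).surjective) <| by
      intro f
      refine (Submodule.Quotient.mk_eq_zero _).trans ?_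
      constructor
      · rintro ⟨z, hz⟩
        refine ⟨ModuleCat.ofHom (LinearMap.toSpanSingleton R N z),
          (homQuotientSpanSingletonEquiv t N).injective (Subtype.ext ?_)⟩
        change (s * 1) • z = _
        rw [mul_one]
        exact hz
      · rintro ⟨g, rfl⟩
        exact ⟨g.hom (1 : R), (g.hom.map_smul s (1 : R)).symm⟩

/-- A projective resolution of period two: `Ext²ᵠ⁺¹(R ⧸ (s), N)` does not depend on `q`. -/
def extOdd (h : IsExactPair s t) : (q : ℕ) →
    Abelian.Ext (ModuleCat.of R (R ⧸ Ideal.span {s})) N (2 * q + 1) ≃+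
      Submodule.torsionBy R N t ⧸
        (LinearMap.range (LinearMap.lsmul R N s)).submoduleOf (Submodule.torsionBy R N t)
  | 0 => h.extOne N
  | q + 1 => (extShiftEquiv h.shortExact_shortComplex N (2 * q + 1)).trans <|
      (extShiftEquiv h.symm.shortExact_shortComplex N (2 * q)).trans (extOdd h q)

/-- The even counterpart of `IsExactPair.extOdd`, in positive degrees. -/
def extEven (h : IsExactPair s t) (q : ℕ) :
    Abelian.Ext (ModuleCat.of R (R ⧸ Ideal.span {s})) N (2 * q + 2) ≃+
      Submodule.torsionBy R N s ⧸
        (LinearMap.range (LinearMap.lsmul R N t)).submoduleOf (Submodule.torsionBy R N s) :=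
  (extShiftEquiv h.shortExact_shortComplex N (2 * q)).trans (h.symm.extOdd N q)

end IsExactPair

end ExactPair

section CyclicAlgebra

variable {R S : Type u} [CommRing R] [CommRing S] [Algebra R S]

variable {s t : R}

lemma smul_eq_zero_of_ker_eq_span (hker : RingHom.ker (algebraMap R S) = Ideal.span {s}) (y : S) :
    s • y = 0 := by
  have hs : algebraMap R S s = 0 :=
    RingHom.mem_ker.1 (hker ▸ Ideal.mem_span_singleton_self s)
  rw [Algebra.smul_def, hs, zero_mul]

/-- A quotient ring of `R` by `(s)`, as an object of the category of `R`-modules. -/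
def isoQuotientOfKerEqSpan (hS : Function.Surjective (algebraMap R S))
    (hker : RingHom.ker (algebraMap R S) = Ideal.span {s}) :
    ModuleCat.of R (R ⧸ Ideal.span {s}) ≅ ModuleCat.of R S :=
  ((Submodule.quotEquivOfEq _ _ hker.symm).trans
    ((Algebra.linearMap R S).quotKerEquivOfSurjective hS)).toModuleIso

/-- The elements of `S` killed by `t : R` are those killed by the image of `t`. -/
def torsionByAlgebraMapEquiv (t : R) :
    Submodule.torsionBy R S t ≃+ Submodule.torsionBy S S (algebraMap R S t) where
  __ := Equiv.subtypeEquivRight fun y ↦ by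
    rw [Submodule.mem_torsionBy_iff, Submodule.mem_torsionBy_iff, algebraMap_smul]
  map_add' _ _ := rfl

lemma range_lsmul_eq_restrictScalars_span (t : R) :
    LinearMap.range (LinearMap.lsmul R S t) =
      (Ideal.span {algebraMap R S t}).restrictScalars R := by
  ext y
  simp [Ideal.mem_span_singleton, dvd_def, Algebra.smul_def, eq_comm]

variable [HasExt.{w} (ModuleCat.{u} R)]

/-- `Ext⁰_R(S, S) = End_R(S)` is `S` when `S` is a quotient ring of `R`. -/
def extSelfZero (hS : Function.Surjective (algebraMap R S)) :
    Abelian.Ext (ModuleCat.of R S) (ModuleCat.of R S) 0 ≃+ S :=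
  Abelian.Ext.addEquiv₀.trans <| ModuleCat.homAddEquiv.trans <|
    (LinearMap.extendScalarsOfSurjectiveEquiv hS).toAddEquiv.trans
      (LinearMap.ringLmapEquivSelf S S S).toAddEquiv

namespace IsExactPair

/-- For `S = R ⧸ (s)`, the odd groups `Ext_R(S, S)` are the annihilator of `t` in `S`. -/
def extSelfOdd (h : IsExactPair s t) (hS : Function.Surjective (algebraMap R S))
    (hker : RingHom.ker (algebraMap R S) = Ideal.span {s}) (q : ℕ) :
    Abelian.Ext (ModuleCat.of R S) (ModuleCat.of R S) (2 * q + 1) ≃+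
      Submodule.torsionBy S S (algebraMap R S t) :=
  (extCongrLeft (isoQuotientOfKerEqSpan hS hker).symm _ _).trans <|
    (h.extOdd (ModuleCat.of R S) q).trans <|
      (Submodule.quotEquivOfEqBot _ <| by
        have hrange : LinearMap.range (LinearMap.lsmul R S s) = ⊥ :=
          LinearMap.range_eq_bot.2 (LinearMap.ext (smul_eq_zero_of_ker_eq_span hker))
        exact (congrArg (Submodule.submoduleOf · _) hrange).trans
          (Submodule.ker_subtype _)).toAddEquiv.trans (torsionByAlgebraMapEquiv t)

/-- For `S = R ⧸ (s)`, the groups `Ext_R(S, S)` in positive even degrees are `S ⧸ (t)`. -/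
def extSelfEven (h : IsExactPair s t) (hS : Function.Surjective (algebraMap R S))
    (hker : RingHom.ker (algebraMap R S) = Ideal.span {s}) (q : ℕ) :
    Abelian.Ext (ModuleCat.of R S) (ModuleCat.of R S) (2 * q + 2) ≃+
      S ⧸ Ideal.span {algebraMap R S t} :=
  have htop : Submodule.torsionBy R S s = ⊤ :=
    eq_top_iff.2 fun y _ ↦ smul_eq_zero_of_ker_eq_span hker y
  (extCongrLeft (isoQuotientOfKerEqSpan hS hker).symm _ _).trans <|
    (h.extEven (ModuleCat.of R S) q).trans <|
      (Submodule.Quotient.equiv _ ((Ideal.span {algebraMap R S t}).restrictScalars R)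
        (LinearEquiv.ofTop _ htop) <| by
          rw [← range_lsmul_eq_restrictScalars_span, LinearEquiv.toLinearMap_ofTop,
            Submodule.submoduleOf, Submodule.map_comap_subtype, htop, top_inf_eq]).toAddEquiv.trans
        (Submodule.Quotient.restrictScalarsEquiv R _).toAddEquiv

end IsExactPair

end CyclicAlgebra

section Hochschild

/-- A commutative `R`-algebra `S` as a module over its enveloping algebra `S ⊗[R] S`, which acts
through the multiplication map. -/
def diagonalModule (R S : Type u) [CommRing R] [CommRing S] [Algebra R S] :
    ModuleCat.{u} (S ⊗[R] S) :=
  letI := (Algebra.TensorProduct.lmul' R (S := S)).toRingHom.toAlgebra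
  ModuleCat.of (S ⊗[R] S) S

/-- The Hochschild cohomology group `HHᵐ(S; S)` of a commutative `R`-algebra `S`, defined as
`Extᵐ` over the enveloping algebra. This is the usual Hochschild cohomology when `S` is projective
over `R`. -/
abbrev HochschildCohomology (R S : Type u) [CommRing R] [CommRing S] [Algebra R S]
    [HasExt.{w} (ModuleCat.{u} (S ⊗[R] S))] (m : ℕ) : Type w :=
  Abelian.Ext (diagonalModule R S) (diagonalModule R S) m

namespace HochschildCohomology

variable {R S : Type u} [CommRing R] [CommRing S] [Algebra R S]

lemma lmul'_surjective : Function.Surjective (Algebra.TensorProduct.lmul' R (S := S)) := fun a ↦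
  ⟨a ⊗ₜ 1, by simp⟩

variable [HasExt.{w} (ModuleCat.{u} (S ⊗[R] S))]

/-- `HH⁰(S; S)` is the centre of `S`, that is, `S` itself. -/
def zeroEquiv : HochschildCohomology R S 0 ≃+ S :=
  letI := (Algebra.TensorProduct.lmul' R (S := S)).toRingHom.toAlgebra
  extSelfZero lmul'_surjective

end HochschildCohomology

end Hochschild

section Monogenic

open AdjoinRoot

variable {R : Type u} [CommRing R] (f : R[X])

/-- Writing `S = R[x]/(f)`, the presentation `S[Y] → S ⊗[R] S`, `Y ↦ 1 ⊗ x`, which identifies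
`S ⊗[R] S` with `S[Y]/(f(Y))`. -/
def tensorEval : (AdjoinRoot f)[X] →ₐ[AdjoinRoot f] AdjoinRoot f ⊗[R] AdjoinRoot f :=
  aeval (1 ⊗ₜ root f)

/-- The cofactor of `Y - x` in `f(Y)`, as a polynomial over `S = R[x]/(f)`. -/
def rootCofactor : (AdjoinRoot f)[X] :=
  f.map (algebraMap R (AdjoinRoot f)) /ₘ (X - C (root f))

/-- The element `f'(x)` of `S = R[x]/(f)`, which is the image of the cofactor of `Y - x` in `f(Y)`
under `Y ↦ x`. -/
def rootDerivative : AdjoinRoot f :=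
  aeval (root f) (derivative f)

lemma X_sub_C_root_mul_rootCofactor :
    (X - C (root f)) * rootCofactor f = f.map (algebraMap R (AdjoinRoot f)) :=
  mul_divByMonic_eq_iff_isRoot.2 (isRoot_root f)

lemma eval_root_rootCofactor : (rootCofactor f).eval (root f) = rootDerivative f := by
  rw [rootDerivative, aeval_def, ← Polynomial.eval_map, ← derivative_map,
    ← X_sub_C_root_mul_rootCofactor]
  simp

lemma monic_rootCofactor {f : R[X]} (hf : f.Monic) : (rootCofactor f).Monic :=
  (monic_X_sub_C _).of_mul_monic_left <| by
    rw [X_sub_C_root_mul_rootCofactor]; exact hf.map _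

lemma tensorEval_map (p : R[X]) :
    tensorEval f (p.map (algebraMap R (AdjoinRoot f))) = 1 ⊗ₜ AdjoinRoot.mk f p := by
  rw [tensorEval, aeval_map_algebraMap, ← aeval_eq]
  exact aeval_algHom_apply (Algebra.TensorProduct.includeRight (R := R)) (root f) p

lemma tensorEval_surjective : Function.Surjective (tensorEval f) := by
  intro b
  induction b with
  | zero => exact ⟨0, map_zero _⟩
  | add a b ha hb =>
    obtain ⟨p, rfl⟩ := ha
    obtain ⟨q, rfl⟩ := hb
    exact ⟨p + q, map_add _ p q⟩
  | tmul a b =>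
    obtain ⟨p, rfl⟩ := AdjoinRoot.mk_surjective b
    refine ⟨a • p.map (algebraMap R (AdjoinRoot f)), ?_⟩
    rw [map_smul, tensorEval_map, TensorProduct.smul_tmul', smul_eq_mul, mul_one]

/-- The map `S ⊗[R] S → S[Y]/(f(Y))` inverting the one induced by `tensorEval f`. -/
def tensorToAdjoinRoot : AdjoinRoot f ⊗[R] AdjoinRoot f →ₐ[AdjoinRoot f]
    AdjoinRoot (f.map (algebraMap R (AdjoinRoot f))) :=
  Algebra.TensorProduct.lift (Algebra.ofId _ _)
    (liftAlgHom f (Algebra.ofId _ _) (root _) <| by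
      change aeval (root (f.map (algebraMap R (AdjoinRoot f)))) f = 0
      rw [← aeval_map_algebraMap (AdjoinRoot f), aeval_eq, mk_self]) fun _ _ ↦ .all _ _

lemma tensorToAdjoinRoot_tensorEval (p : (AdjoinRoot f)[X]) :
    tensorToAdjoinRoot f (tensorEval f p) = AdjoinRoot.mk _ p := by
  have : (tensorToAdjoinRoot f).comp (tensorEval f) = mkₐ _ := by
    ext
    rw [AlgHom.comp_apply, tensorEval, aeval_X, tensorToAdjoinRoot,
      Algebra.TensorProduct.lift_tmul, map_one, one_mul, liftAlgHom_root]
    rfl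
  exact congr($this p)

lemma tensorEval_eq_zero_iff (p : (AdjoinRoot f)[X]) :
    tensorEval f p = 0 ↔ f.map (algebraMap R (AdjoinRoot f)) ∣ p := by
  constructor
  · intro hp
    rw [← AdjoinRoot.mk_eq_zero, ← tensorToAdjoinRoot_tensorEval, hp, map_zero]
  · rintro ⟨q, rfl⟩
    rw [map_mul, tensorEval_map, mk_self, TensorProduct.tmul_zero, zero_mul]

lemma isExactPair_tensorEval {f : R[X]} (hf : f.Monic) :
    IsExactPair (tensorEval f (X - C (root f))) (tensorEval f (rootCofactor f)) :=
  IsExactPair.map_of_surjective (φ := (tensorEval f).toRingHom) (tensorEval_surjective f)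
    (monic_X_sub_C _).isRegular.left (monic_rootCofactor hf).isRegular.left fun p ↦ by
      rw [X_sub_C_root_mul_rootCofactor]; exact tensorEval_eq_zero_iff f p

lemma lmul'_tensorEval (p : (AdjoinRoot f)[X]) :
    Algebra.TensorProduct.lmul' R (tensorEval f p) = p.eval (root f) := by
  have : (Algebra.TensorProduct.lmul'' R).comp (tensorEval f) = aeval (root f) := by
    ext
    rw [AlgHom.comp_apply, tensorEval, aeval_X, aeval_X]
    exact one_mul (root f)
  exact congr($this p)

lemma lmul'_tensorEval_rootCofactor :
    Algebra.TensorProduct.lmul' R (tensorEval f (rootCofactor f)) =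
      rootDerivative f :=
  (lmul'_tensorEval f _).trans (eval_root_rootCofactor f)

lemma ker_lmul'_eq_span :
    RingHom.ker (Algebra.TensorProduct.lmul' R (S := AdjoinRoot f)) =
      Ideal.span {tensorEval f (X - C (root f))} := by
  ext b
  obtain ⟨p, rfl⟩ := tensorEval_surjective f b
  rw [RingHom.mem_ker, lmul'_tensorEval, Ideal.mem_span_singleton]
  constructor
  · intro hp
    exact map_dvd (tensorEval f) (dvd_iff_isRoot.2 hp)
  · rintro ⟨c, hc⟩
    rw [← lmul'_tensorEval, hc, map_mul, lmul'_tensorEval, eval_sub, eval_X, eval_C, sub_self,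
      zero_mul]

namespace HochschildCohomology

variable {f} [HasExt.{w} (ModuleCat.{u} (AdjoinRoot f ⊗[R] AdjoinRoot f))]

/-- The odd Hochschild cohomology of `S = R[x]/(f)` is the annihilator of `f'(x)`. -/
def adjoinRootOddEquiv (hf : f.Monic) (q : ℕ) :
    HochschildCohomology R (AdjoinRoot f) (2 * q + 1) ≃+
      Submodule.torsionBy (AdjoinRoot f) (AdjoinRoot f) (rootDerivative f) :=
  letI := (Algebra.TensorProduct.lmul' R (S := AdjoinRoot f)).toRingHom.toAlgebra
  ((isExactPair_tensorEval hf).extSelfOdd lmul'_surjective (ker_lmul'_eq_span f) q).trans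
    (LinearEquiv.ofEq _ _ <|
      congrArg (Submodule.torsionBy _ _) (lmul'_tensorEval_rootCofactor f)).toAddEquiv

/-- The Hochschild cohomology of `S = R[x]/(f)` in positive even degrees is `S ⧸ (f'(x))`. -/
def adjoinRootEvenEquiv (hf : f.Monic) (q : ℕ) :
    HochschildCohomology R (AdjoinRoot f) (2 * q + 2) ≃+
      AdjoinRoot f ⧸ Ideal.span {rootDerivative f} :=
  letI := (Algebra.TensorProduct.lmul' R (S := AdjoinRoot f)).toRingHom.toAlgebra
  ((isExactPair_tensorEval hf).extSelfEven lmul'_surjective (ker_lmul'_eq_span f) q).trans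
    (Ideal.quotEquivOfEq <|
      congrArg (Ideal.span {·}) (lmul'_tensorEval_rootCofactor f)).toAddEquiv

end HochschildCohomology

end Monogenic

section TruncatedPolynomial

open AdjoinRoot

variable (R : Type u) [CommRing R] (n : ℕ)

/-- The truncated polynomial ring `R[x]/(xⁿ⁺¹)`. -/
abbrev TruncatedPolynomial : Type u := AdjoinRoot (X ^ (n + 1) : R[X])

lemma rootDerivative_X_pow :
    rootDerivative (X ^ (n + 1) : R[X]) = ((n + 1 : ℕ) : R) • root (X ^ (n + 1) : R[X]) ^ n := by
  rw [rootDerivative, derivative_X_pow, map_mul, aeval_C, map_pow, aeval_X, Algebra.smul_def,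
    add_tsub_cancel_right]

variable [Nontrivial R]

/-- The basis `1, x, …, xⁿ` of `R[x]/(xⁿ⁺¹)`. -/
def truncatedBasis : Module.Basis (Fin (n + 1)) R (TruncatedPolynomial R n) :=
  (powerBasis' (monic_X_pow (n + 1))).basis.reindex (finCongr (natDegree_X_pow (n + 1)))

lemma truncatedBasis_apply (i : Fin (n + 1)) :
    truncatedBasis R n i = root (X ^ (n + 1) : R[X]) ^ (i : ℕ) := by
  rw [truncatedBasis, Module.Basis.reindex_apply, PowerBasis.basis_eq_pow]
  rfl

/-- The coefficients of `1, x, …, xⁿ` of an element of `R[x]/(xⁿ⁺¹)`. -/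
def truncatedCoeffs : TruncatedPolynomial R n ≃ₗ[R] (Fin (n + 1) → R) :=
  (truncatedBasis R n).equivFun

variable {R n}

lemma truncatedCoeffs_root_pow (i : Fin (n + 1)) :
    truncatedCoeffs R n (root (X ^ (n + 1) : R[X]) ^ (i : ℕ)) = Pi.single i 1 := by
  rw [← truncatedBasis_apply, ← Finsupp.single_eq_pi_single, ← (truncatedBasis R n).repr_self]
  rfl

lemma root_pow_mul (a : TruncatedPolynomial R n) :
    root (X ^ (n + 1) : R[X]) ^ n * a =
      truncatedCoeffs R n a 0 • root (X ^ (n + 1) : R[X]) ^ n := by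
  have root_pow : root (X ^ (n + 1) : R[X]) ^ (n + 1) = 0 := by
    rw [← mk_X, ← map_pow, mk_self]
  have root_pow_mul_root_pow_succ (i : Fin n) :
      root (X ^ (n + 1) : R[X]) ^ n * root (X ^ (n + 1) : R[X]) ^ (i.succ : ℕ) = 0 := by
    rw [← pow_add]
    exact pow_eq_zero_of_le (by rw [Fin.val_succ]; omega) root_pow
  have hsum : ∑ i, truncatedCoeffs R n a i • truncatedBasis R n i = a :=
    (truncatedBasis R n).sum_equivFun a
  conv_lhs => rw [← hsum]
  simp only [Fin.sum_univ_succ, truncatedBasis_apply, mul_add, Finset.mul_sum, mul_smul_comm,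
    root_pow_mul_root_pow_succ, smul_zero, Finset.sum_const_zero, add_zero, Fin.val_zero, pow_zero,
    mul_one]

lemma truncatedCoeffs_rootDerivative_mul (a : TruncatedPolynomial R n) :
    truncatedCoeffs R n (rootDerivative (X ^ (n + 1) : R[X]) * a) =
      Pi.single (Fin.last n) (((n + 1 : ℕ) : R) * truncatedCoeffs R n a 0) := by
  have coeffs_root_pow :
      truncatedCoeffs R n (root (X ^ (n + 1) : R[X]) ^ n) = Pi.single (Fin.last n) 1 :=
    truncatedCoeffs_root_pow (Fin.last n)
  rw [rootDerivative_X_pow, smul_mul_assoc, root_pow_mul, smul_smul, map_smul,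
    coeffs_root_pow, ← Pi.single_smul, smul_eq_mul, mul_one]

lemma mem_torsionBy_rootDerivative_iff (a : TruncatedPolynomial R n) :
    a ∈ Submodule.torsionBy _ _ (rootDerivative (X ^ (n + 1) : R[X])) ↔
      truncatedCoeffs R n a 0 ∈ Submodule.torsionBy R R ((n + 1 : ℕ) : R) := by
  rw [Submodule.mem_torsionBy_iff, Submodule.mem_torsionBy_iff, smul_eq_mul, smul_eq_mul,
    ← (truncatedCoeffs R n).map_eq_zero_iff, truncatedCoeffs_rootDerivative_mul,
    Pi.single_eq_zero_iff]

lemma mem_span_rootDerivative_iff (a : TruncatedPolynomial R n) :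
    a ∈ Ideal.span {rootDerivative (X ^ (n + 1) : R[X])} ↔
      (∀ i : Fin n, truncatedCoeffs R n a i.castSucc = 0) ∧
        truncatedCoeffs R n a (Fin.last n) ∈ Ideal.span {((n + 1 : ℕ) : R)} := by
  rw [Ideal.mem_span_singleton, Ideal.mem_span_singleton]
  constructor
  · rintro ⟨b, rfl⟩
    rw [truncatedCoeffs_rootDerivative_mul, Pi.single_eq_same]
    exact ⟨fun i ↦ Pi.single_eq_of_ne i.castSucc_ne_last _, dvd_mul_right _ _⟩
  · rintro ⟨hinit, r, hr⟩
    refine ⟨(truncatedCoeffs R n).symm (Pi.single 0 r), (truncatedCoeffs R n).injective ?_⟩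
    rw [truncatedCoeffs_rootDerivative_mul, LinearEquiv.apply_symm_apply, Pi.single_eq_same]
    ext i
    induction i using Fin.lastCases with
    | last => rw [hr, Pi.single_eq_same]
    | cast i => rw [hinit, Pi.single_eq_of_ne i.castSucc_ne_last]

variable (R n)

/-- The annihilator of `(n + 1) xⁿ` in `R[x]/(xⁿ⁺¹)`: the coefficients of `x, …, xⁿ` are free, the
constant one is killed by `n + 1`. -/
def torsionByRootDerivativeEquiv :
    Submodule.torsionBy _ (TruncatedPolynomial R n) (rootDerivative (X ^ (n + 1) : R[X])) ≃+
      (Fin n → R) × Submodule.torsionBy R R ((n + 1 : ℕ) : R) where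
  toFun a := (Fin.tail (truncatedCoeffs R n a),
    ⟨truncatedCoeffs R n a 0, (mem_torsionBy_rootDerivative_iff _).1 a.2⟩)
  invFun c := ⟨(truncatedCoeffs R n).symm (Fin.cons c.2 c.1),
    (mem_torsionBy_rootDerivative_iff _).2 <| by
      rw [LinearEquiv.apply_symm_apply, Fin.cons_zero]
      exact c.2.2⟩
  left_inv a := by simp
  right_inv c := by simp
  map_add' a b := by ext <;> simp [Fin.tail]

/-- The coefficients of `1, …, xⁿ⁻¹` together with the class modulo `n + 1` of that of `xⁿ`. -/
def truncatedCoeffsMod :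
    TruncatedPolynomial R n →+ (Fin n → R) × R ⧸ Ideal.span {((n + 1 : ℕ) : R)} where
  toFun a := (Fin.init (truncatedCoeffs R n a),
    Ideal.Quotient.mk _ (truncatedCoeffs R n a (Fin.last n)))
  map_zero' := by ext <;> simp [Fin.init]
  map_add' a b := by ext <;> simp [Fin.init]

lemma truncatedCoeffsMod_surjective : Function.Surjective (truncatedCoeffsMod R n) := by
  rintro ⟨v, c⟩
  obtain ⟨r, rfl⟩ := Ideal.Quotient.mk_surjective c
  exact ⟨(truncatedCoeffs R n).symm (Fin.snoc v r), by simp [truncatedCoeffsMod]⟩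

lemma truncatedCoeffsMod_eq_zero_iff (a : TruncatedPolynomial R n) :
    truncatedCoeffsMod R n a = 0 ↔ a ∈ Ideal.span {rootDerivative (X ^ (n + 1) : R[X])} := by
  rw [mem_span_rootDerivative_iff, ← Ideal.Quotient.eq_zero_iff_mem, Prod.ext_iff, funext_iff]
  rfl

/-- The quotient of `R[x]/(xⁿ⁺¹)` by `(n + 1) xⁿ`. -/
def quotientSpanRootDerivativeEquiv :
    TruncatedPolynomial R n ⧸ Ideal.span {rootDerivative (X ^ (n + 1) : R[X])} ≃+
      (Fin n → R) × R ⧸ Ideal.span {((n + 1 : ℕ) : R)} :=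
  (QuotientAddGroup.quotientAddEquivOfEq <|
    AddSubgroup.ext fun a ↦ (truncatedCoeffsMod_eq_zero_iff R n a).symm).trans
      (QuotientAddGroup.quotientKerEquivOfSurjective _ (truncatedCoeffsMod_surjective R n))

end TruncatedPolynomial

/-- A torsion submodule of a ring without zero divisors is a trivial direct factor. -/
def prodTorsionByEquiv {R : Type*} [CommRing R] [NoZeroDivisors R] (G : Type*) [AddCommGroup G]
    {r : R} (hr : r ≠ 0) : G × Submodule.torsionBy R R r ≃+ G :=
  letI : Unique (Submodule.torsionBy R R r) :=
    { default := 0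
      uniq a := Subtype.ext ((mul_eq_zero.1 a.2).resolve_left hr) }
  .prodUnique

theorem stmt6_general (R : Type u) [CommRing R] [Nontrivial R] (n : ℕ)
    [HasExt.{w} (ModuleCat.{u} (TruncatedPolynomial R n ⊗[R] TruncatedPolynomial R n))] :
    Nonempty (HochschildCohomology R (TruncatedPolynomial R n) 0 ≃+ TruncatedPolynomial R n) ∧
    Nonempty (HochschildCohomology R (TruncatedPolynomial R n) 0 ≃+ (Fin (n + 1) → R)) ∧
    ∀ q : ℕ, 1 ≤ q →
      Nonempty (HochschildCohomology R (TruncatedPolynomial R n) (2 * q - 1) ≃+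
        (Fin n → R) × Submodule.torsionBy R R ((n + 1 : ℕ) : R)) ∧
      Nonempty (HochschildCohomology R (TruncatedPolynomial R n) (2 * q) ≃+
        (Fin n → R) × R ⧸ Ideal.span {((n + 1 : ℕ) : R)}) := by
  refine ⟨⟨HochschildCohomology.zeroEquiv⟩, ⟨HochschildCohomology.zeroEquiv.trans
    (truncatedCoeffs R n).toAddEquiv⟩, fun q hq ↦ ?_⟩
  obtain ⟨q, rfl⟩ := Nat.exists_eq_add_of_le' hq
  have hf : (X ^ (n + 1) : R[X]).Monic := monic_X_pow (n + 1)
  exact ⟨⟨(HochschildCohomology.adjoinRootOddEquiv hf q).trans (torsionByRootDerivativeEquiv R n)⟩,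
    ⟨(HochschildCohomology.adjoinRootEvenEquiv hf q).trans (quotientSpanRootDerivativeEquiv R n)⟩⟩

/-- as abelian groups, `Ext⁰_B(A,A) ≅ A` (free abelian of rank `n+1`),
`Ext^{2q−1}_B(A,A) ≅ ℤⁿ` and `Ext^{2q}_B(A,A) ≅ ℤⁿ ⊕ ℤ/(n+1)ℤ` for `q ≥ 1`. -/
theorem stmt6 (n : ℕ) (hn : 1 ≤ n) :
    Nonempty (Abelian.Ext (M n) (M n) 0 ≃+ A n) ∧
    Nonempty (Abelian.Ext (M n) (M n) 0 ≃+ (Fin (n + 1) → ℤ)) ∧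
    ∀ q : ℕ, 1 ≤ q →
      Nonempty (Abelian.Ext (M n) (M n) (2 * q - 1) ≃+ (Fin n → ℤ)) ∧
      Nonempty (Abelian.Ext (M n) (M n) (2 * q) ≃+ ((Fin n → ℤ) × ZMod (n + 1))) := by
  have hn₀ : ((n + 1 : ℕ) : ℤ) ≠ 0 := Nat.cast_ne_zero.2 n.succ_ne_zero
  obtain ⟨h₀, h₀', h⟩ := stmt6_general ℤ n
  exact ⟨h₀, h₀', fun q hq ↦ ⟨(h q hq).1.map (·.trans <| prodTorsionByEquiv (Fin n → ℤ) hn₀),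
    (h q hq).2.map (·.trans <|
      .prodCongr (.refl _) (Int.quotientSpanNatEquivZMod (n + 1)).toAddEquiv)⟩⟩

end
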